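/- Let r > 1/2 and z_n with y_n = 1/z_n ≥ n + n^r eventually (subcritical). Then E_{z_n}^{(n)}(L) ∼ n/(y_n − n) as n → ∞. In particular, for z = 1/(sn) with s > 1 fixed, E_z^{(n)}(L) → 1/(s−1). -/

import Mathlib

open Finset Filter

/-- `c_N^{(n)} = (n-1)!/(n-1-N)!`, the number of `N`-step self-avoiding walks on `K_n`. -/
noncomputable def sawCount (n N : ℕ) : ℝ :=
  (Nat.factorial (n - 1) : ℝ) / (Nat.factorial (n - 1 - N) : ℝ)

/-- The susceptibility `χ_z^{(n)} = ∑_{N=0}^{n-1} c_N^{(n)} z^N`. -/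
noncomputable def chi (n : ℕ) (z : ℝ) : ℝ :=
  ∑ N ∈ Finset.range n, sawCount n N * z ^ N

/-- The expected length `E_z^{(n)}(L) = (∑_N N c_N^{(n)} z^N)/χ_z^{(n)}`. -/
noncomputable def meanL (n : ℕ) (z : ℝ) : ℝ :=
  (∑ N ∈ Finset.range n, (N : ℝ) * sawCount n N * z ^ N) / chi n z

/-!
The relation `c_{N+1} = (n - 1 - N) c_N` gives the three-term recurrence
`(y - n + 2j + 3) M_{j+1} + M_{j+2} = (j + 1)(n - 1 - j) M_j` for the factorial moments `M_j` of `L`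
at `z = 1/y`. For `y > n`, dropping nonnegative terms bounds `M_j` by `j! (n / (y - n))^j`, the
factorial moments of a geometric variable of mean `n / (y - n)`. The case `j = 0` of the recurrence,
`(y - n) M_1 = n - 1 - 3 M_1 - M_2`, then shows that `M_1 = E(L)` differs from `n / (y - n)` by a
relative error of order `1 / n + 1 / (y - n) + n / (y - n)^2`, which vanishes as soon as
`y - n` is much larger than `√n`.
-/

/-- The factorial moment `E_z^{(n)}(L (L - 1) ⋯ (L - j + 1))` of the length, with which the mean
length is estimated. It is `0` for `n = 0`, where `chi` vanishes. -/
noncomputable def factorialMomentL (n : ℕ) (z : ℝ) (j : ℕ) : ℝ :=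
  (∑ N ∈ range n, (N.descFactorial j : ℝ) * (sawCount n N * z ^ N)) / chi n z

lemma sawCount_pos (n N : ℕ) : 0 < sawCount n N := by
  unfold sawCount
  positivity

lemma sawCount_succ {n N : ℕ} (h : N + 1 < n) :
    sawCount n (N + 1) = ((n : ℝ) - 1 - N) * sawCount n N := by
  obtain ⟨k, rfl⟩ := Nat.exists_eq_add_of_lt h
  have hsucc : N + 1 + k + 1 - 1 - (N + 1) = k := by lia
  have hself : N + 1 + k + 1 - 1 - N = k + 1 := by lia
  rw [sawCount, sawCount, hsucc, hself, Nat.factorial_succ k]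
  push_cast
  field_simp
  ring

lemma chi_pos {n : ℕ} (hn : n ≠ 0) {z : ℝ} (hz : 0 < z) : 0 < chi n z :=
  sum_pos (fun N _ => mul_pos (sawCount_pos n N) (pow_pos hz N)) (nonempty_range_iff.mpr hn)

lemma sum_mul_sawCount_eq (n : ℕ) (z : ℝ) {f : ℕ → ℝ} (hf : f 0 = 0) :
    ∑ N ∈ range n, f N * (sawCount n N * z ^ N) =
      z * ∑ N ∈ range n, ((n : ℝ) - 1 - N) * f (N + 1) * (sawCount n N * z ^ N) := by
  cases n with
  | zero => simp
  | succ k =>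
    have hlast : ((k + 1 : ℕ) : ℝ) - 1 - k = 0 := by push_cast; ring
    rw [sum_range_succ', sum_range_succ, hf, hlast, zero_mul, zero_mul, zero_mul, add_zero,
      add_zero, mul_sum]
    refine sum_congr rfl fun N hN => ?_
    rw [sawCount_succ (Nat.succ_lt_succ (mem_range.mp hN)), pow_succ]
    ring

lemma cast_descFactorial_succ {R : Type*} [CommRing R] (N j : ℕ) :
    (N.descFactorial (j + 1) : R) = ((N : R) - j) * N.descFactorial j := by
  simp only [← descPochhammer_eval_eq_descFactorial, descPochhammer_succ_eval, mul_comm]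

lemma factorialMomentL_nonneg (n : ℕ) {z : ℝ} (hz : 0 ≤ z) (j : ℕ) :
    0 ≤ factorialMomentL n z j := by
  have hweight (N : ℕ) : 0 ≤ sawCount n N * z ^ N :=
    mul_nonneg (sawCount_pos n N).le (pow_nonneg hz N)
  exact div_nonneg (sum_nonneg fun N _ => mul_nonneg (Nat.cast_nonneg _) (hweight N))
    (sum_nonneg fun N _ => hweight N)

lemma factorialMomentL_zero {n : ℕ} (hn : n ≠ 0) {z : ℝ} (hz : 0 < z) :
    factorialMomentL n z 0 = 1 := by
  simp only [factorialMomentL, Nat.descFactorial_zero, Nat.cast_one, one_mul]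
  exact div_self (chi_pos hn hz).ne'

lemma factorialMomentL_one (n : ℕ) (z : ℝ) : factorialMomentL n z 1 = meanL n z := by
  simp only [factorialMomentL, meanL, Nat.descFactorial_one, mul_assoc]

lemma factorialMomentL_recurrence (n : ℕ) {y : ℝ} (hy : y ≠ 0) (j : ℕ) :
    (y - n + 2 * j + 3) * factorialMomentL n (1 / y) (j + 1) + factorialMomentL n (1 / y) (j + 2) =
      (j + 1) * (n - 1 - j) * factorialMomentL n (1 / y) j := by
  have hshift := sum_mul_sawCount_eq n (1 / y) (f := fun N => N.descFactorial (j + 1)) (by simp)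
  have hsum : y * ∑ N ∈ range n, (N.descFactorial (j + 1) : ℝ) * (sawCount n N * (1 / y) ^ N) =
      ∑ N ∈ range n, ((n : ℝ) - 1 - N) * (N + 1).descFactorial (j + 1) *
        (sawCount n N * (1 / y) ^ N) := by
    rw [hshift, ← mul_assoc, mul_one_div_cancel hy, one_mul]
  have hpoint (N : ℕ) : ((n : ℝ) - 1 - N) * (N + 1).descFactorial (j + 1) =
      (j + 1) * (n - 1 - j) * N.descFactorial j + (n - 2 * j - 3) * N.descFactorial (j + 1) -
        N.descFactorial (j + 2) := by
    rw [Nat.succ_descFactorial_succ, cast_descFactorial_succ N (j + 1), cast_descFactorial_succ]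
    push_cast
    ring
  simp only [hpoint, add_mul, sub_mul _ _ (sawCount _ _ * _), sum_add_distrib, sum_sub_distrib,
    mul_assoc _ (Nat.cast (Nat.descFactorial _ _) : ℝ), ← mul_sum] at hsum
  simp only [factorialMomentL, ← mul_div_assoc, ← add_div]
  congr 1
  linear_combination hsum

lemma factorialMomentL_succ_le {n : ℕ} {y : ℝ} (hy : n < y) (j : ℕ) :
    factorialMomentL n (1 / y) (j + 1) ≤
      (j + 1) * (n / (y - n)) * factorialMomentL n (1 / y) j := by
  have hypos : 0 < y := n.cast_nonneg.trans_lt hy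
  have hnonneg := factorialMomentL_nonneg n (one_div_pos.mpr hypos).le
  have hrec := factorialMomentL_recurrence n hypos.ne' j
  have hd : 0 < y - n := sub_pos.mpr hy
  have hlower : 0 ≤ (2 * j + 3) * factorialMomentL n (1 / y) (j + 1) :=
    mul_nonneg (by positivity) (hnonneg _)
  have hdrop : 0 ≤ (j + 1) * (1 + j) * factorialMomentL n (1 / y) j :=
    mul_nonneg (by positivity) (hnonneg _)
  rw [mul_div_assoc', div_mul_eq_mul_div, le_div_iff₀ hd]
  linarith [hnonneg (j + 2)]

lemma factorialMomentL_le {n : ℕ} {y : ℝ} (hy : n < y) (j : ℕ) :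
    factorialMomentL n (1 / y) j ≤ j.factorial * (n / (y - n)) ^ j := by
  have hratio : 0 ≤ n / (y - n) := div_nonneg n.cast_nonneg (sub_pos.mpr hy).le
  induction j with
  | zero =>
    simpa [factorialMomentL, chi] using div_self_le_one (chi n (1 / y))
  | succ j ih =>
    have hfactor : 0 ≤ (j + 1) * (n / (y - n)) := mul_nonneg j.cast_add_one_pos.le hratio
    calc factorialMomentL n (1 / y) (j + 1)
        ≤ (j + 1) * (n / (y - n)) * factorialMomentL n (1 / y) j := factorialMomentL_succ_le hy j
      _ ≤ (j + 1) * (n / (y - n)) * (j.factorial * (n / (y - n)) ^ j) :=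
        mul_le_mul_of_nonneg_left ih hfactor
      _ = (j + 1).factorial * (n / (y - n)) ^ (j + 1) := by
        rw [Nat.factorial_succ]
        push_cast
        ring

lemma meanL_le {n : ℕ} {y : ℝ} (hy : n < y) : meanL n (1 / y) ≤ n / (y - n) := by
  simpa [factorialMomentL_one] using factorialMomentL_le hy 1

lemma le_meanL_mul {n : ℕ} (hn : n ≠ 0) {y : ℝ} (hy : n < y) :
    n - 1 - 3 * (n / (y - n)) - 2 * (n / (y - n)) ^ 2 ≤ meanL n (1 / y) * (y - n) := by
  have hypos : 0 < y := n.cast_nonneg.trans_lt hy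
  have hrec : (y - n + 3) * meanL n (1 / y) + factorialMomentL n (1 / y) 2 = n - 1 := by
    have h := factorialMomentL_recurrence n hypos.ne' 0
    rw [factorialMomentL_zero hn (one_div_pos.mpr hypos), zero_add, zero_add,
      factorialMomentL_one] at h
    simpa using h
  have hsecond : factorialMomentL n (1 / y) 2 ≤ 2 * (n / (y - n)) ^ 2 := by
    simpa using factorialMomentL_le hy 2
  linarith [meanL_le hy]

lemma meanL_div_le_one {n : ℕ} {y : ℝ} (hy : n < y) :
    meanL n (1 / y) / (n / (y - n)) ≤ 1 :=
  div_le_one_of_le₀ (meanL_le hy) (div_nonneg n.cast_nonneg (sub_pos.mpr hy).le)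

lemma le_meanL_div {n : ℕ} (hn : n ≠ 0) {y : ℝ} (hy : n < y) :
    1 - 1 / n - 3 / (y - n) - 2 * n / (y - n) ^ 2 ≤ meanL n (1 / y) / (n / (y - n)) := by
  have hd : 0 < y - n := sub_pos.mpr hy
  have hnpos : (0 : ℝ) < n := Nat.cast_pos.mpr (Nat.pos_of_ne_zero hn)
  rw [div_div_eq_mul_div, le_div_iff₀ hnpos]
  refine le_of_eq_of_le ?_ (le_meanL_mul hn hy)
  field_simp

theorem meanL_subcritical_general (y : ℕ → ℝ)
    (hy : Tendsto (fun n : ℕ => (y n - n) / √n) atTop atTop) :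
    Tendsto (fun n : ℕ => meanL n (1 / y n) / ((n : ℝ) / (y n - n))) atTop (nhds 1) := by
  have hgap : Tendsto (fun n : ℕ => √n / (y n - n)) atTop (nhds 0) := by
    simpa only [Pi.inv_def, inv_div] using hy.inv_tendsto_atTop
  have hsqrt : Tendsto (fun n : ℕ => 1 / √n) atTop (nhds 0) := by
    simpa only [Pi.inv_def, one_div, Function.comp_def] using
      (Real.tendsto_sqrt_atTop.comp tendsto_natCast_atTop_atTop).inv_tendsto_atTop
  have hlower : Tendsto (fun n : ℕ =>
      1 - (1 / √n) ^ 2 - 3 * (1 / √n * (√n / (y n - n))) - 2 * (√n / (y n - n)) ^ 2)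
      atTop (nhds 1) := by
    simpa using (((hsqrt.pow 2).const_sub 1).sub ((hsqrt.mul hgap).const_mul 3)).sub
      ((hgap.pow 2).const_mul 2)
  have hlt : ∀ᶠ n : ℕ in atTop, (n : ℝ) < y n := by
    filter_upwards [hy.eventually_gt_atTop 0] with n hn
    exact sub_pos.mp (pos_of_mul_pos_left hn (by positivity))
  refine tendsto_of_tendsto_of_tendsto_of_le_of_le' hlower tendsto_const_nhds ?_
    (hlt.mono fun _ => meanL_div_le_one)
  filter_upwards [hlt, eventually_ne_atTop 0] with n hn hn0
  have hsqrt0 : √(n : ℝ) ≠ 0 := (Real.sqrt_pos.mpr (by positivity)).ne'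
  refine le_of_eq_of_le ?_ (le_meanL_div hn0 hn)
  rw [one_div_mul_eq_div, div_div_cancel_left' hsqrt0, div_pow, div_pow, one_pow,
    Real.sq_sqrt n.cast_nonneg]
  ring

lemma tendsto_sub_div_sqrt_of_add_rpow_le {r : ℝ} (hr : 1 / 2 < r) {y : ℕ → ℝ}
    (hy : ∀ᶠ n : ℕ in atTop, (n : ℝ) + (n : ℝ) ^ r ≤ y n) :
    Tendsto (fun n : ℕ => (y n - n) / √n) atTop atTop := by
  have hpow : Tendsto (fun n : ℕ => (n : ℝ) ^ (r - 1 / 2)) atTop atTop :=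
    (tendsto_rpow_atTop (sub_pos.mpr hr)).comp tendsto_natCast_atTop_atTop
  refine tendsto_atTop_mono' atTop ?_ hpow
  filter_upwards [hy, eventually_gt_atTop 0] with n hn hn0
  rw [Real.rpow_sub (Nat.cast_pos.mpr hn0), ← Real.sqrt_eq_rpow]
  gcongr
  exact le_sub_iff_add_le'.mpr hn

lemma tendsto_meanL_one_div_mul {s : ℝ} (hs : 1 < s) :
    Tendsto (fun n : ℕ => meanL n (1 / (s * n))) atTop (nhds (1 / (s - 1))) := by
  have hs' : 0 < s - 1 := sub_pos.mpr hs
  have hgap : Tendsto (fun n : ℕ => (s * n - n) / √n) atTop atTop := by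
    refine ((Real.tendsto_sqrt_atTop.comp tendsto_natCast_atTop_atTop).const_mul_atTop
      hs').congr fun n => ?_
    rw [← sub_one_mul, mul_div_assoc, Real.div_sqrt, Function.comp_apply]
  have hratio := (meanL_subcritical_general (fun n => s * n) hgap).mul_const (1 / (s - 1))
  rw [one_mul] at hratio
  refine hratio.congr' ?_
  filter_upwards [eventually_ne_atTop 0] with n hn
  have hscale : (n : ℝ) / (s * n - n) = 1 / (s - 1) := by
    field_simp
  rw [hscale, div_mul_cancel₀ _ (one_div_pos.mpr hs').ne']

theorem meanL_subcritical (r : ℝ) (hr : 1 / 2 < r) (y : ℕ → ℝ)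
    (hypos : ∀ n, 0 < y n)
    (hy : ∀ᶠ n : ℕ in atTop, (n : ℝ) + (n : ℝ) ^ r ≤ y n) :
    Tendsto (fun n : ℕ => meanL n (1 / y n) / ((n : ℝ) / (y n - n)))
      atTop (nhds 1) ∧
    ∀ s : ℝ, 1 < s →
      Tendsto (fun n : ℕ => meanL n (1 / (s * n))) atTop (nhds (1 / (s - 1))) :=
  ⟨meanL_subcritical_general y (tendsto_sub_div_sqrt_of_add_rpow_le hr hy),
    fun _ => tendsto_meanL_one_div_mul⟩
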